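/- Speculative sampling is distributionally invariant: let V be a finite vocabulary and let p and q be probability mass functions on V with q(x) > 0 for all x in the support of q. Sample x ~ q; accept x with probability min(1, p(x)/q(x)); upon rejection, resample a token from the normalized residual distribution p'(x) = max(0, p(x) - q(x)) / Σ_{x'} max(0, p(x') - q(x')). Then for every x' ∈ V, the probability that the final emitted token equals x' is exactly p(x'). -/

import Mathlib

open Finset

/-!
The mass `q x * min 1 (p x / q x)` of accepted drafts is `min (p x) (q x)`, which falls short of
`p x` by the residual `max 0 (p x - q x)`. The rejected mass is `∑ max 0 (q x - p x)`. Since `p` and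
`q` have the same total mass, this equals the residual normalizer `∑ max 0 (p x - q x)`, so
resampling from the residual supplies exactly what is missing.
-/

theorem sub_min_eq_max_zero_sub {G : Type*} [AddCommGroup G] [LinearOrder G]
    [IsOrderedAddMonoid G] (a b : G) : a - min a b = max 0 (a - b) := by
  rcases le_total a b with hab | hba
  · rw [min_eq_left hab, sub_self, max_eq_left (sub_nonpos.mpr hab)]
  · rw [min_eq_right hba, max_eq_right (sub_nonneg.mpr hba)]

section Acceptance

variable {K : Type*} [Field K] [LinearOrder K] [IsStrictOrderedRing K] {a b : K}

theorem mul_min_one_div_eq_min (ha : 0 ≤ a) (hb : 0 ≤ b) : b * min 1 (a / b) = min a b := by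
  rcases hb.eq_or_lt with rfl | hb_pos
  · rw [zero_mul, min_eq_right ha]
  · rw [mul_min_of_nonneg _ _ hb, mul_one, mul_div_cancel₀ _ hb_pos.ne', min_comm]

theorem mul_one_sub_min_one_div_eq_max (ha : 0 ≤ a) (hb : 0 ≤ b) :
    b * (1 - min 1 (a / b)) = max 0 (b - a) := by
  rw [mul_sub, mul_one, mul_min_one_div_eq_min ha hb, min_comm, sub_min_eq_max_zero_sub]

end Acceptance

section TotalMass

variable {ι : Type*} {f g : ι → ℝ}

theorem summable_max_zero_sub (hf : Summable f) (hg : Summable g) :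
    Summable fun i ↦ max 0 (f i - g i) :=
  (hf.sub hg).abs.of_nonneg_of_le (fun _ ↦ le_max_left _ _)
    fun _ ↦ max_le (abs_nonneg _) (le_abs_self _)

theorem tsum_max_zero_sub_comm (hf : Summable f) (hg : Summable g)
    (hfg : ∑' i, f i = ∑' i, g i) :
    ∑' i, max 0 (f i - g i) = ∑' i, max 0 (g i - f i) := by
  have excess_sub_deficit (i : ι) : max 0 (f i - g i) - max 0 (g i - f i) = f i - g i := by
    rw [max_comm, max_comm 0, ← neg_sub (f i), max_zero_sub_max_neg_zero_eq_self]
  rw [← sub_eq_zero]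
  calc ∑' i, max 0 (f i - g i) - ∑' i, max 0 (g i - f i)
      = ∑' i, (max 0 (f i - g i) - max 0 (g i - f i)) :=
        ((summable_max_zero_sub hf hg).tsum_sub (summable_max_zero_sub hg hf)).symm
    _ = ∑' i, (f i - g i) := tsum_congr excess_sub_deficit
    _ = 0 := by rw [hf.tsum_sub hg, hfg, sub_self]

theorem tsum_max_zero_sub_pos_of_lt (hf : Summable f) (hg : Summable g) {i : ι}
    (hi : g i < f i) : 0 < ∑' j, max 0 (f j - g j) :=
  (summable_max_zero_sub hf hg).tsum_pos (fun _ ↦ le_max_left _ _) i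
    (lt_max_of_lt_right (sub_pos.mpr hi))

theorem tsum_max_zero_sub_pos (hf : Summable f) (hg : Summable g)
    (hfg : ∑' i, f i = ∑' i, g i) (hne : f ≠ g) :
    0 < ∑' i, max 0 (f i - g i) := by
  obtain ⟨i, hi⟩ := Function.ne_iff.mp hne
  rcases hi.lt_or_gt with hlt | hgt
  · rw [tsum_max_zero_sub_comm hf hg hfg]
    exact tsum_max_zero_sub_pos_of_lt hg hf hlt
  · exact tsum_max_zero_sub_pos_of_lt hf hg hgt

end TotalMass

theorem speculative_sampling_invariant_general {V : Type*} {p q : V → ℝ}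
    (hp0 : ∀ x, 0 ≤ p x) (hq0 : ∀ x, 0 ≤ q x) (hp : Summable p) (hq : Summable q)
    (hmass : ∑' x, p x = ∑' x, q x) (hpq : p ≠ q) (x' : V) :
    q x' * min 1 (p x' / q x')
      + (∑' x, q x * (1 - min 1 (p x / q x)))
        * (max 0 (p x' - q x') / ∑' x, max 0 (p x - q x))
      = p x' := by
  have rejected_eq_normalizer :
      ∑' x, q x * (1 - min 1 (p x / q x)) = ∑' x, max 0 (p x - q x) := by
    rw [tsum_max_zero_sub_comm hp hq hmass]
    exact tsum_congr fun x ↦ mul_one_sub_min_one_div_eq_max (hp0 x) (hq0 x)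
  have normalizer_ne_zero := (tsum_max_zero_sub_pos hp hq hmass hpq).ne'
  rw [rejected_eq_normalizer, mul_div_cancel₀ _ normalizer_ne_zero,
    mul_min_one_div_eq_min (hp0 x') (hq0 x'), ← sub_min_eq_max_zero_sub, add_sub_cancel]

/-- Speculative sampling is distributionally invariant: drafting `x ~ q`, accepting with
probability `min 1 (p x / q x)`, and on rejection resampling from the normalized residual
`max 0 (p x - q x) / Z` yields exactly the distribution `p`. -/
theorem speculative_sampling_invariant {V : Type*} [Fintype V]
    (p q : V → ℝ)
    (hp0 : ∀ x, 0 ≤ p x) (hq0 : ∀ x, 0 ≤ q x)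
    (hp1 : ∑ x, p x = 1) (hq1 : ∑ x, q x = 1)
    (hqpos : ∀ x ∈ Function.support q, 0 < q x)
    (hpq : p ≠ q) (x' : V) :
    q x' * min 1 (p x' / q x')
      + (∑ x, q x * (1 - min 1 (p x / q x)))
        * (max 0 (p x' - q x') / ∑ x, max 0 (p x - q x))
      = p x' := by
  simpa only [tsum_fintype] using speculative_sampling_invariant_general hp0 hq0
    .of_finite .of_finite (by simp only [tsum_fintype, hp1, hq1]) hpq x'
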